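/- arXiv:2410.04798 — 3 statements merged into one kernel-verified Lean document; each statement's English description precedes it below -/
import Mathlib

section
/- Let V be a vocabulary (a type), d a positive natural number, and e : V → EuclideanSpace ℝ (Fin d) a family of token embeddings that is orthonormal: ⟪e u, e v⟫ = 1 if u = v and 0 otherwise. Let t : ℕ → V be a token sequence, N ≥ 1, and a, b ∈ V with a ≠ b, such that every occurrence of a before position N is immediately followed by b (for all i < N, t i = a implies t (i+1) = b) and there exists i < N with t i = a. Define s_j = ⟪e a, e (t (j-1))⟫ - ⟪e a, e (t j)⟫ for 1 ≤ j ≤ N. Then max_{1 ≤ j ≤ N} s_j = 1, and every maximizer j ∈ {1, …, N} of s satisfies t j = b. -/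
open scoped InnerProductSpace

/-- If every occurrence of `a` before position `N` is immediately followed by `b ≠ a`,
and `a` occurs before position `N`, then the convolution-processed scores
`s_j = ⟪e a, e (t (j-1))⟫ - ⟪e a, e (t j)⟫` over `1 ≤ j ≤ N` have maximum 1,
and every maximizer `j` satisfies `t j = b`. -/
theorem argmax_attends_to_b
    (V : Type*) [DecidableEq V] (d : ℕ) (hd : 0 < d)
    (e : V → EuclideanSpace ℝ (Fin d))
    (he : ∀ u v : V, ⟪e u, e v⟫_ℝ = if u = v then 1 else 0)
    (t : ℕ → V) (N : ℕ) (hN : 1 ≤ N) (a b : V) (hab : a ≠ b)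
    (hfollow : ∀ i : ℕ, i < N → t i = a → t (i + 1) = b)
    (hocc : ∃ i : ℕ, i < N ∧ t i = a)
    (s : ℕ → ℝ)
    (hs : ∀ j : ℕ, 1 ≤ j → j ≤ N →
      s j = ⟪e a, e (t (j - 1))⟫_ℝ - ⟪e a, e (t j)⟫_ℝ) :
    (Finset.Icc 1 N).sup' (Finset.nonempty_Icc.mpr hN) s = 1 ∧
    ∀ j ∈ Finset.Icc 1 N,
      s j = (Finset.Icc 1 N).sup' (Finset.nonempty_Icc.mpr hN) s → t j = b := by
  -- By orthonormality the score is a difference of two indicators, hence at most 1, with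
  -- equality only where the previous token is `a` and the current one is not.
  have hs' : ∀ j : ℕ, 1 ≤ j → j ≤ N →
      s j = (if a = t (j - 1) then (1 : ℝ) else 0) - (if a = t j then 1 else 0) := by
    intro j h1 h2
    rw [hs j h1 h2, he, he]
  have hmax : (Finset.Icc 1 N).sup' (Finset.nonempty_Icc.mpr hN) s = 1 := by
    apply le_antisymm
    · apply Finset.sup'_le
      intro j hj
      obtain ⟨h1, h2⟩ := Finset.mem_Icc.mp hj
      rw [hs' j h1 h2]
      split_ifs <;> norm_num
    · obtain ⟨i, hi, hia⟩ := hocc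
      -- The bound is attained right after an occurrence of `a`, since `b ≠ a`.
      have hval : s (i + 1) = 1 := by
        rw [hs' (i + 1) (by omega) (by omega), hfollow i hi hia]
        simp [hia, hab]
      rw [← hval]
      exact Finset.le_sup' s (Finset.mem_Icc.mpr ⟨by omega, by omega⟩)
  refine ⟨hmax, fun j hj hsj => ?_⟩
  obtain ⟨h1, h2⟩ := Finset.mem_Icc.mp hj
  rw [hmax, hs' j h1 h2] at hsj
  have hprev : t (j - 1) = a := by
    by_contra hne
    rw [if_neg (Ne.symm hne)] at hsj
    split_ifs at hsj <;> norm_num at hsj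
  have hb := hfollow (j - 1) (by omega) hprev
  rwa [Nat.sub_add_cancel h1] at hb
end

section
/- Let n be a positive natural number and s : Fin n → ℝ. Let M = {j : s j = max_m s m} be the (nonempty) set of maximizers of s. Then for every j ∈ Fin n, the softmax weight at inverse temperature β, namely exp(β · s j) / Σ_{m} exp(β · s m), converges as β → ∞ to 1 / |M| if j ∈ M, and to 0 if j ∉ M. -/
/-!
Dividing numerator and denominator by `exp (β * c)`, where `c` is the maximal score, turns every
term into `exp (β * (s m - c))`. This is constantly `1` at a maximizer and decays to `0` elsewhere,
so the numerator tends to the indicator of `M` at `j` and the denominator tends to `|M|`, which is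
nonzero because the maximum over a nonempty finite index set is attained.
-/

/-- As the inverse temperature `β → ∞`, the softmax weight at index `j` converges
to `1 / |M|` if `j` is a maximizer of the scores `s`, and to `0` otherwise. -/
theorem softmax_tendsto_argmax
    (n : ℕ) (hn : 0 < n) (s : Fin n → ℝ)
    (M : Finset (Fin n))
    (hM : ∀ j : Fin n,
      j ∈ M ↔ s j = Finset.univ.sup' (Finset.univ_nonempty_iff.mpr ⟨⟨0, hn⟩⟩) s) :
    ∀ j : Fin n,
      Filter.Tendsto
        (fun β : ℝ => Real.exp (β * s j) / ∑ m : Fin n, Real.exp (β * s m))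
        Filter.atTop
        (nhds (if j ∈ M then 1 / (M.card : ℝ) else 0)) := by
  intro j
  have hne : (Finset.univ : Finset (Fin n)).Nonempty := Finset.univ_nonempty_iff.mpr ⟨⟨0, hn⟩⟩
  obtain ⟨k, -, hk⟩ := Finset.exists_mem_eq_sup' hne s
  have hle : ∀ m, s m ≤ Finset.univ.sup' hne s := fun m => Finset.le_sup' s (Finset.mem_univ m)
  have hkM : k ∈ M := (hM k).2 hk.symm
  generalize Finset.univ.sup' hne s = c at hM hle
  have hterm : ∀ m, Filter.Tendsto (fun β : ℝ => Real.exp (β * (s m - c))) Filter.atTop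
      (nhds (if m ∈ M then (1 : ℝ) else 0)) := by
    intro m
    by_cases hm : m ∈ M
    · simp [hm, (hM m).1 hm]
    · have hlt : s m - c < 0 := sub_neg.2 (lt_of_le_of_ne (hle m) fun h => hm ((hM m).2 h))
      simpa [hm] using Filter.tendsto_id.atTop_mul_const_of_neg hlt
  have hsum : Filter.Tendsto (fun β : ℝ => ∑ m, Real.exp (β * (s m - c))) Filter.atTop
      (nhds (M.card : ℝ)) := by
    simpa using tendsto_finsetSum Finset.univ fun m _ => hterm m
  have hcard : (M.card : ℝ) ≠ 0 := Nat.cast_ne_zero.2 (Finset.card_ne_zero_of_mem hkM)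
  have hdiv := (hterm j).div hsum hcard
  rw [ite_div, zero_div] at hdiv
  refine hdiv.congr fun β => ?_
  simp only [Pi.div_apply, mul_sub, Real.exp_sub, ← Finset.sum_div]
  exact div_div_div_cancel_right₀ (Real.exp_ne_zero _) _ _
end

section
/- (Proposition 1: associative recall via convolution, without positional encoding.) Let V be a vocabulary (a type), d a positive natural number, and e : V → EuclideanSpace ℝ (Fin d) a family of token embeddings that is orthonormal: ⟪e u, e v⟫ = 1 if u = v and 0 otherwise. Let t : ℕ → V be a token sequence, N ≥ 1, and a, b ∈ V with a ≠ b, such that every occurrence of a before position N is immediately followed by b (for all i < N, t i = a implies t (i+1) = b) and there exists i < N with t i = a. Define the convolution-processed attention scores s_j = ⟪e a, e (t (j-1))⟫ - ⟪e a, e (t j)⟫ for 1 ≤ j ≤ N, and for β > 0 the softmax attention output o(β) = Σ_{j=1}^{N} [exp(β · s_j) / Σ_{m=1}^{N} exp(β · s_m)] • e (t j). Then o(β) converges to e b as β → ∞. -/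
/-! The score `s j` equals `1` when `t (j - 1) = a` (then `t j = b ≠ a`) and is at most `0`
otherwise. Since the softmax weights sum to one, `o β - e b = ∑ j, w j • (e (t j) - e b)`. Summands
with `t (j - 1) = a` vanish because `t j = b`; in the others the weight is at most `exp (-β)`,
because the denominator contains a term `exp β` from an occurrence of `a`. -/

open scoped InnerProductSpace

/-- Proposition 1 (associative recall via convolution, without positional encoding):
the softmax attention output over the convolution-processed scores converges to the
embedding of the token `b` that always follows `a`, as the inverse temperature `β → ∞`. -/
theorem associative_recall_via_convolution
    (V : Type*) [DecidableEq V] (d : ℕ) (hd : 0 < d)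
    (e : V → EuclideanSpace ℝ (Fin d))
    (he : ∀ u v : V, ⟪e u, e v⟫_ℝ = if u = v then 1 else 0)
    (t : ℕ → V) (N : ℕ) (hN : 1 ≤ N) (a b : V) (hab : a ≠ b)
    (hfollow : ∀ i : ℕ, i < N → t i = a → t (i + 1) = b)
    (hocc : ∃ i : ℕ, i < N ∧ t i = a)
    (s : ℕ → ℝ)
    (hs : ∀ j : ℕ, 1 ≤ j → j ≤ N →
      s j = ⟪e a, e (t (j - 1))⟫_ℝ - ⟪e a, e (t j)⟫_ℝ)
    (o : ℝ → EuclideanSpace ℝ (Fin d))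
    (ho : ∀ β : ℝ, o β = ∑ j ∈ Finset.Icc 1 N,
      (Real.exp (β * s j) / ∑ m ∈ Finset.Icc 1 N, Real.exp (β * s m)) • e (t j)) :
    Filter.Tendsto o Filter.atTop (nhds (e b)) := by
  obtain ⟨i, hi, hia⟩ := hocc
  have hsi : s (i + 1) = 1 := by
    rw [hs (i + 1) (by omega) (by omega), Nat.add_sub_cancel, hia, hfollow i hi hia, he, he]
    simp [hab]
  have hZ (β : ℝ) : Real.exp β ≤ ∑ m ∈ Finset.Icc 1 N, Real.exp (β * s m) := by
    have h := Finset.single_le_sum (f := fun m => Real.exp (β * s m)) (s := Finset.Icc 1 N)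
      (fun m _ => (Real.exp_pos _).le) (Finset.mem_Icc.2 ⟨Nat.le_add_left 1 i, hi⟩)
    simpa [hsi] using h
  have hZpos (β : ℝ) : 0 < ∑ m ∈ Finset.Icc 1 N, Real.exp (β * s m) :=
    (Real.exp_pos β).trans_le (hZ β)
  have hrepr : o = fun β => e b + ∑ j ∈ Finset.Icc 1 N,
      (Real.exp (β * s j) / ∑ m ∈ Finset.Icc 1 N, Real.exp (β * s m)) • (e (t j) - e b) := by
    funext β
    simp only [smul_sub, Finset.sum_sub_distrib]
    rw [← Finset.sum_smul, ← Finset.sum_div, div_self (hZpos β).ne', one_smul, ho β]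
    abel
  have hterm : ∀ j ∈ Finset.Icc 1 N, Filter.Tendsto (fun β : ℝ =>
      (Real.exp (β * s j) / ∑ m ∈ Finset.Icc 1 N, Real.exp (β * s m)) • (e (t j) - e b))
      Filter.atTop (nhds 0) := by
    intro j hj
    obtain ⟨hj1, hjN⟩ := Finset.mem_Icc.1 hj
    by_cases hprev : t (j - 1) = a
    · have hb : t j = b := by
        have h := hfollow (j - 1) (by omega) hprev
        rwa [Nat.sub_add_cancel hj1] at h
      simp [hb]
    · have hsj : s j ≤ 0 := by
        rw [hs j hj1 hjN, he, he, if_neg (Ne.symm hprev)]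
        split_ifs <;> norm_num
      have hw : Filter.Tendsto (fun β : ℝ =>
          Real.exp (β * s j) / ∑ m ∈ Finset.Icc 1 N, Real.exp (β * s m))
          Filter.atTop (nhds 0) := by
        refine squeeze_zero' (Filter.Eventually.of_forall fun β =>
          div_nonneg (Real.exp_pos _).le (hZpos β).le) ?_ Real.tendsto_exp_neg_atTop_nhds_zero
        filter_upwards [Filter.eventually_ge_atTop 0] with β hβ
        rw [div_le_iff₀ (hZpos β)]
        calc Real.exp (β * s j) ≤ 1 :=
              Real.exp_le_one_iff.2 (mul_nonpos_of_nonneg_of_nonpos hβ hsj)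
          _ = Real.exp (-β) * Real.exp β := by rw [← Real.exp_add]; simp
          _ ≤ _ := mul_le_mul_of_nonneg_left (hZ β) (Real.exp_pos _).le
      simpa using hw.smul_const (e (t j) - e b)
  rw [hrepr]
  simpa using (tendsto_finsetSum _ hterm).const_add (e b)
end
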